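/- Let N ≥ 1 be an integer, p a real parameter, and d ≥ 0 an integer. Define the real polynomial q(x) = Σ_{0 ≤ k,j ≤ d} [(−d)_j·(−d)_k·(p−1)^{d−k}·p^{d−j}/(j!·k!)] · (−N−d−1)_{d−j}·(−N−d−1)_{d−k} · K_{N+k+j+1}(x+k+1;p,N+k+j+1). Then, as an identity of real polynomials, p·q(x) + (1−p)·q(x−1) = K_d(x−N−1;p,−N−2) · K_{N+d+1}(x;p,N). (Thus q is the exceptional Krawtchouk polynomial K̂_{N+d+1}^{(2,d)}, the added state of the type-2 family, and the backward operator B^{(2,d)} maps it to K_{N+d+1}.) -/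

import Mathlib

open Polynomial

/-- Pochhammer symbol `(c)_k = c (c+1) ⋯ (c+k−1)`. -/
noncomputable def poch (c : ℝ) (k : ℕ) : ℝ := ∏ i ∈ Finset.range k, (c + i)

/-- The monic Krawtchouk polynomial
`K_n(x;p,a) = Σ_{j=0}^{n} ((−n)_j (−a+j)_{n−j} / j!) p^{n−j} (−x)_j`,
where `(−x)_j = Π_{i=0}^{j−1} (i − x)` as a polynomial in `x`. -/
noncomputable def kraw (n : ℕ) (p a : ℝ) : Polynomial ℝ :=
  ∑ j ∈ Finset.range (n + 1),
    Polynomial.C (poch (-(n : ℝ)) j * poch (-a + j) (n - j) / (Nat.factorial j) * p ^ (n - j)) *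
      ∏ i ∈ Finset.range j, (Polynomial.C (i : ℝ) - Polynomial.X)

noncomputable def ff (x : ℝ) (j : ℕ) : ℝ := ∏ i ∈ Finset.range j, (x - i)

noncomputable def FK (n : ℕ) (p a x : ℝ) : ℝ :=
  ∑ j ∈ Finset.range (n + 1), (n.choose j : ℝ) * poch (-a + j) (n - j) * p ^ (n - j) * ff x j

lemma ff_succ (x : ℝ) (j : ℕ) : ff x (j + 1) = ff x j * (x - j) := by
  simp [ff, Finset.prod_range_succ]

lemma ff_zero (x : ℝ) : ff x 0 = 1 := by simp [ff]

lemma poch_zero (x : ℝ) : poch x 0 = 1 := by simp [poch]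

lemma poch_succ (x : ℝ) (j : ℕ) : poch x (j + 1) = poch x j * (x + j) := by
  simp [poch, Finset.prod_range_succ]

lemma ff_add (x : ℝ) (a b : ℕ) : ff x (a + b) = ff x a * ff (x - a) b := by
  unfold ff
  rw [Finset.prod_range_add]
  congr 1
  apply Finset.prod_congr rfl
  intro i _
  push_cast; ring

lemma poch_add (x : ℝ) (a b : ℕ) : poch x (a + b) = poch x a * poch (x + a) b := by
  unfold poch
  rw [Finset.prod_range_add]
  congr 1
  apply Finset.prod_congr rfl
  intro i _
  push_cast; ring

lemma ff_succ_left (x : ℝ) (j : ℕ) : ff (x + 1) (j + 1) = (x + 1) * ff x j := by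
  rw [add_comm j 1, ff_add, ff_succ, ff_zero]
  simp

lemma poch_eq_ff (x : ℝ) (k : ℕ) : poch x k = (-1) ^ k * ff (-x) k := by
  induction k with
  | zero => simp [ff, poch]
  | succ k ih => rw [poch_succ, ff_succ, ih]; ring

lemma ff_shift (x : ℝ) (k : ℕ) : ff (x + k) k = poch (x + 1) k := by
  induction k with
  | zero => simp [ff, poch]
  | succ k ih =>
    rw [poch_succ, ← ih]
    have := ff_succ_left (x + k) k
    push_cast
    rw [← add_assoc, this]; ring

lemma poch_refl (c : ℝ) (n : ℕ) : poch c n = (-1) ^ n * poch (1 - c - n) n := by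
  have := ff_shift (c - 1) n
  rw [poch_eq_ff (1 - c - n), ← mul_assoc, ← mul_pow]
  rw [show -(1 - c - (n : ℝ)) = c - 1 + n by ring, this]
  simp

lemma choose_ff (n j : ℕ) : ff (n : ℝ) j = (n.choose j : ℝ) * (j.factorial : ℝ) := by
  have h : ff (n : ℝ) j = (n.descFactorial j : ℝ) := by
    induction j with
    | zero => simp [ff]
    | succ j ih =>
      rw [ff_succ, ih, Nat.descFactorial_succ]
      rcases le_or_gt j n with h | h
      · push_cast [Nat.cast_sub h]; ring
      · simp [Nat.descFactorial_of_lt h]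
  rw [h, Nat.descFactorial_eq_factorial_mul_choose]
  push_cast; ring

lemma poch_neg_nat (n j : ℕ) :
    poch (-(n : ℝ)) j = (-1) ^ j * ((n.choose j : ℝ) * (j.factorial : ℝ)) := by
  rw [poch_eq_ff, neg_neg, choose_ff]

lemma neg_one_sq_pow (j : ℕ) : ((-1 : ℝ)) ^ j * (-1) ^ j = 1 := by
  rw [← mul_pow]; simp

lemma kraw_eval (n : ℕ) (p a x : ℝ) : (kraw n p a).eval x = FK n p a x := by
  unfold kraw FK
  rw [eval_finsetSum]
  apply Finset.sum_congr rfl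
  intro j _
  have h : eval x (∏ i ∈ Finset.range j, (C (i : ℝ) - X)) = (-1) ^ j * ff x j := by
    rw [eval_prod, ← neg_neg x, ← poch_eq_ff]
    unfold poch
    apply Finset.prod_congr rfl
    intro i _
    simp; ring
  rw [eval_mul, eval_C, h, poch_neg_nat]
  have hj : (j.factorial : ℝ) ≠ 0 := by positivity
  have h2 := neg_one_sq_pow j
  field_simp
  linear_combination ((n.choose j : ℝ) * poch (-a + j) (n - j) * p ^ (n - j) * ff x j) * h2

lemma FK_diff (n : ℕ) (p a x : ℝ) :
    FK (n + 1) p (a + 1) (x + 1) - FK (n + 1) p (a + 1) x = (n + 1) * FK n p a x := by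
  unfold FK
  rw [← Finset.sum_sub_distrib, Finset.sum_range_succ', Finset.mul_sum]
  simp only [ff_zero, sub_self, add_zero]
  apply Finset.sum_congr rfl
  intro j _
  rw [ff_succ_left, ff_succ, Nat.add_sub_add_right]
  have h : ((n + 1 : ℕ) : ℝ) * (n.choose j : ℝ) = ((n+1).choose (j+1) : ℝ) * ((j + 1 : ℕ) : ℝ) := by
    exact_mod_cast Nat.add_one_mul_choose_eq n j
  push_cast at h ⊢
  rw [show -(a + 1) + ((j : ℝ) + 1) = -a + j by ring]
  linear_combination (-(poch (-a + j) (n - j) * p ^ (n - j) * ff x j)) * h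

lemma FK_zero (n : ℕ) (p a : ℝ) : FK n p a 0 = poch (-a) n * p ^ n := by
  unfold FK
  rw [Finset.sum_range_succ', Finset.sum_eq_zero]
  · simp [ff_zero]
  · intro j _
    have : ff 0 (j + 1) = 0 := by
      unfold ff; rw [Finset.prod_range_succ']; simp
    rw [this]; simp

lemma FK_self (n : ℕ) (p a : ℝ) : FK n p a a = poch (-a) n * (p - 1) ^ n := by
  unfold FK
  rw [sub_eq_add_neg, add_comm p (-1), add_pow, Finset.mul_sum]
  apply Finset.sum_congr rfl
  intro j hj
  have hj : j ≤ n := by simpa [Nat.lt_succ_iff] using hj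
  have h1 : poch (-a) n = poch (-a) j * poch (-a + j) (n - j) := by
    rw [← poch_add, Nat.add_sub_cancel' hj]
  have h2 := poch_eq_ff (-a) j
  rw [neg_neg] at h2
  rw [h1, h2]
  have h3 := neg_one_sq_pow j
  linear_combination (-((n.choose j : ℝ) * poch (-a + j) (n - j) * p ^ (n - j) * ff a j)) * h3

lemma FK_symm (n : ℕ) : ∀ (p a : ℝ) (m : ℕ),
    FK n (1 - p) a (a - m) = (-1) ^ n * FK n p a m := by
  induction n with
  | zero => intro p a m; simp [FK, ff_zero, poch_zero]
  | succ n ih =>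
    intro p a m
    induction m with
    | zero =>
      simp only [Nat.cast_zero, sub_zero]
      rw [FK_self, FK_zero, show 1 - p - 1 = (-1) * p by ring, mul_pow]; ring
    | succ m ihm =>
      have h1 := FK_diff n p (a - 1) m
      have h2 := FK_diff n (1 - p) (a - 1) (a - 1 - m)
      have h3 := ih p (a - 1) m
      rw [h3] at h2
      rw [show a - 1 + 1 = a by ring] at h1 h2
      rw [show a - 1 - (m : ℝ) + 1 = a - m by ring, ihm] at h2
      push_cast
      rw [show a - ((m : ℝ) + 1) = a - 1 - m by ring]
      rw [pow_succ] at *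
      linear_combination -h2 + ((-1) ^ n) * h1

lemma poch_fact (m k : ℕ) : poch ((m : ℝ) + 1) k * (m.factorial : ℝ) = ((m + k).factorial : ℝ) := by
  induction k with
  | zero => simp [poch_zero]
  | succ k ih =>
    rw [poch_succ, ← add_assoc, Nat.factorial_succ]
    push_cast
    rw [← ih]; ring

lemma poch_neg_self (n : ℕ) : poch (-(n : ℝ)) n = (-1) ^ n * (n.factorial : ℝ) := by
  rw [poch_neg_nat]; simp

lemma FK_back (n : ℕ) (p : ℝ) : ∀ (m : ℕ),
    p * FK n p n (m + 1) + (1 - p) * FK n p n m = ff m n := by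
  induction n with
  | zero => intro m; simp [FK, ff_zero, poch_zero]
  | succ n ih =>
    intro m
    induction m with
    | zero =>
      have h := FK_diff n p n 0
      have h0 : ff ((0 : ℕ) : ℝ) (n + 1) = 0 := by rw [choose_ff]; simp
      rw [h0]
      have e := poch_neg_self (n + 1)
      push_cast at h e ⊢
      rw [FK_zero, FK_zero, e, poch_neg_self, Nat.factorial_succ] at h
      rw [FK_zero, e, Nat.factorial_succ]
      push_cast at h ⊢
      rw [pow_succ] at *
      rw [pow_succ] at *
      linear_combination p * h
    | succ m ihm =>
      have h1 := FK_diff n p n m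
      have h2 := FK_diff n p n (m + 1)
      have h3 := ih m
      have h4 := ff_succ_left m n
      have h5 := ff_succ m n
      push_cast at *
      rw [h4]
      rw [h5] at ihm
      linear_combination ihm + p * h2 + (1 - p) * h1 + ((n : ℝ) + 1) * h3

lemma FK_factor (N d : ℕ) (p x : ℝ) :
    FK (N + d + 1) p N x = ff x (N + 1) * FK d p (-(N : ℝ) - 2) (x - (N + 1)) := by
  unfold FK
  rw [show N + d + 1 + 1 = (N + 1) + (d + 1) by ring, Finset.sum_range_add, Finset.sum_eq_zero,
    zero_add, Finset.mul_sum]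
  · apply Finset.sum_congr rfl
    intro i hi
    have hi : i ≤ d := by simpa [Nat.lt_succ_iff] using hi
    obtain ⟨e, rfl⟩ := Nat.exists_eq_add_of_le hi
    rw [ff_add, show N + (i + e) + 1 - (N + 1 + i) = e by omega, show i + e - i = e by omega]
    have h1 := poch_fact i e
    have h2 := poch_fact (N + 1 + i) e
    have h3 := Nat.add_choose_mul_factorial_mul_factorial i e
    have h4 := Nat.add_choose_mul_factorial_mul_factorial (N + 1 + i) e
    rw [Nat.choose_symm_add.symm] at h3 h4
    rw [show N + 1 + i + e = N + (i + e) + 1 by ring] at h4 h2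
    have h3' : ((i + e).choose i : ℝ) * i.factorial * e.factorial = (i + e).factorial := by
      exact_mod_cast h3
    have h4' : ((N + (i + e) + 1).choose (N + 1 + i) : ℝ) * (N + 1 + i).factorial * e.factorial
        = (N + (i + e) + 1).factorial := by
      exact_mod_cast h4
    have p1 : (i.factorial : ℝ) ≠ 0 := by positivity
    have p2 : (e.factorial : ℝ) ≠ 0 := by positivity
    have p3 : ((N + 1 + i).factorial : ℝ) ≠ 0 := by positivity
    push_cast at *
    rw [show -(N : ℝ) + ((N : ℝ) + 1 + i) = i + 1 by ring,
      show -(-(N : ℝ) - 2) + (i : ℝ) = N + 1 + i + 1 by ring]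
    have key : ((N + (i + e) + 1).choose (N + 1 + i) : ℝ) * poch ((i : ℝ) + 1) e
        = ((i + e).choose i : ℝ) * poch ((N : ℝ) + 1 + i + 1) e := by
      apply mul_right_cancel₀ (mul_ne_zero (mul_ne_zero p1 p2) p3)
      calc _ = (((N + (i + e) + 1).choose (N + 1 + i) : ℝ) * (N + 1 + i).factorial * e.factorial)
            * (poch ((i : ℝ) + 1) e * i.factorial) := by ring
        _ = (((i + e).choose i : ℝ) * i.factorial * e.factorial)
            * (poch ((N : ℝ) + 1 + i + 1) e * (N + 1 + i).factorial) := by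
              rw [h4', h1, h3', h2]; ring
        _ = _ := by ring
    linear_combination (p ^ e * ff x (N + 1) * ff (x - (N + 1)) i) * key
  · intro j hj
    have hj : j ≤ N := by simpa [Nat.lt_succ_iff] using hj
    have : poch (-(N : ℝ) + j) (N + d + 1 - j) = 0 := by
      unfold poch
      apply Finset.prod_eq_zero (i := N - j)
      · simp; omega
      · push_cast [Nat.cast_sub hj]; ring
    rw [this]; simp

lemma poch_flip (N d k : ℕ) (hk : k ≤ d) :
    poch (-(N : ℝ) - d - 1) (d - k) = (-1) ^ (d - k) * poch (-(-(N : ℝ) - 2) + k) (d - k) := by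
  rw [poch_refl]
  congr 2
  push_cast [Nat.cast_sub hk]; ring

lemma sumB (N d : ℕ) (p y : ℝ) :
    ∑ j ∈ Finset.range (d + 1), poch (-(d : ℝ)) j * p ^ (d - j) / (j.factorial : ℝ) *
      poch (-(N : ℝ) - d - 1) (d - j) * ff y j = (-1) ^ d * FK d p (-(N : ℝ) - 2) y := by
  unfold FK
  rw [Finset.mul_sum]
  apply Finset.sum_congr rfl
  intro j hj
  have hj : j ≤ d := by simpa [Nat.lt_succ_iff] using hj
  rw [poch_flip N d j hj, poch_neg_nat]
  have p1 : (j.factorial : ℝ) ≠ 0 := by positivity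
  have e : (-1 : ℝ) ^ d = (-1) ^ j * (-1) ^ (d - j) := by rw [← pow_add, Nat.add_sub_cancel' hj]
  rw [e]
  field_simp

lemma sumA (N d : ℕ) (p : ℝ) (m : ℕ) :
    ∑ k ∈ Finset.range (d + 1), poch (-(d : ℝ)) k * (p - 1) ^ (d - k) / (k.factorial : ℝ) *
      poch (-(N : ℝ) - d - 1) (d - k) * poch ((m : ℝ) + (N + 1) + 1) k
      = (-1) ^ d * FK d p (-(N : ℝ) - 2) m := by
  rw [← FK_symm]
  unfold FK
  apply Finset.sum_congr rfl
  intro j hj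
  have hj : j ≤ d := by simpa [Nat.lt_succ_iff] using hj
  rw [poch_flip N d j hj, poch_neg_nat, poch_eq_ff ((m : ℝ) + (N + 1) + 1)]
  have p1 : (j.factorial : ℝ) ≠ 0 := by positivity
  rw [show -((m : ℝ) + (N + 1) + 1) = -(N : ℝ) - 2 - m by ring]
  rw [show 1 - p = (-1) * (p - 1) by ring, mul_pow]
  have h3 := neg_one_sq_pow j
  field_simp
  rw [pow_two, h3]
  ring

/-- With `q(x) = Σ_{0≤k,j≤d} [(−d)_j (−d)_k (p−1)^{d−k} p^{d−j}/(j! k!)]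
(−N−d−1)_{d−j} (−N−d−1)_{d−k} K_{N+k+j+1}(x+k+1;p,N+k+j+1)`, one has
`p q(x) + (1−p) q(x−1) = K_d(x−N−1;p,−N−2) K_{N+d+1}(x;p,N)`; thus `q` is the added state
`K̂_{N+d+1}^{(2,d)}` of the type-2 family. -/
theorem krawtchouk_exceptional2_added_state (N : ℕ) (hN : 1 ≤ N) (p : ℝ) (d : ℕ) :
    Polynomial.C p *
          (∑ k ∈ Finset.range (d + 1), ∑ j ∈ Finset.range (d + 1),
            Polynomial.C (poch (-(d : ℝ)) j * poch (-(d : ℝ)) k * (p - 1) ^ (d - k) *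
                p ^ (d - j) / ((j.factorial : ℝ) * (k.factorial : ℝ)) *
                poch (-(N : ℝ) - d - 1) (d - j) * poch (-(N : ℝ) - d - 1) (d - k)) *
              (kraw (N + k + j + 1) p ((N : ℝ) + k + j + 1)).comp
                (Polynomial.X + Polynomial.C ((k : ℝ) + 1))) +
        Polynomial.C (1 - p) *
          ((∑ k ∈ Finset.range (d + 1), ∑ j ∈ Finset.range (d + 1),
            Polynomial.C (poch (-(d : ℝ)) j * poch (-(d : ℝ)) k * (p - 1) ^ (d - k) *
                p ^ (d - j) / ((j.factorial : ℝ) * (k.factorial : ℝ)) *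
                poch (-(N : ℝ) - d - 1) (d - j) * poch (-(N : ℝ) - d - 1) (d - k)) *
              (kraw (N + k + j + 1) p ((N : ℝ) + k + j + 1)).comp
                (Polynomial.X + Polynomial.C ((k : ℝ) + 1))).comp (Polynomial.X - 1)) =
      (kraw d p (-(N : ℝ) - 2)).comp (Polynomial.X - Polynomial.C ((N : ℝ) + 1)) *
        kraw (N + d + 1) p (N : ℝ) := by
  have key : ∀ m : ℕ, ∀ k j : ℕ,
      p * FK (N + k + j + 1) p ((N : ℝ) + k + j + 1) ((m : ℝ) + (N + 1) + (k + 1)) +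
      (1 - p) * FK (N + k + j + 1) p ((N : ℝ) + k + j + 1) ((m : ℝ) + (N + 1) - 1 + (k + 1)) =
      poch ((m : ℝ) + (N + 1) + 1) k * ff ((m : ℝ) + (N + 1)) (N + 1) * ff m j := by
    intro m k j
    have h := FK_back (N + k + j + 1) p (m + (N + 1) + k)
    rw [show ff ((m + (N + 1) + k : ℕ) : ℝ) (N + k + j + 1)
      = ff ((m + (N + 1) + k : ℕ) : ℝ) (k + (N + 1) + j) by congr 1; ring] at h
    rw [ff_add, ff_add] at h
    push_cast at h
    rw [ff_shift] at h
    rw [show (m : ℝ) + (N + 1) + k - k = m + (N + 1) by ring,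
      show (m : ℝ) + (N + 1) + k - (k + (N + 1)) = m by ring] at h
    rw [← h]
    congr 3 <;> ring
  apply Polynomial.eq_of_infinite_eval_eq
  apply Set.infinite_of_injective_forall_mem (f := fun m : ℕ => (m : ℝ) + (N + 1))
  · intro a b hab
    simpa using hab
  intro m
  simp only [Set.mem_ofPred_eq, eval_add, eval_mul, eval_C, eval_comp, eval_finsetSum, eval_sub,
    eval_X, eval_one, kraw_eval]
  rw [FK_factor, show (m : ℝ) + (N + 1) - (N + 1) = m by ring]
  rw [Finset.mul_sum, Finset.mul_sum, ← Finset.sum_add_distrib]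
  have hA := sumA N d p m
  have hB := sumB N d p m
  have h3 := neg_one_sq_pow d
  have hAB := congrArg₂ (· * ·) hA hB
  simp only [Finset.sum_mul_sum] at hAB
  trans ff ((m : ℝ) + (N + 1)) (N + 1) * ((-1) ^ d * FK d p (-(N : ℝ) - 2) m *
    ((-1) ^ d * FK d p (-(N : ℝ) - 2) m))
  · rw [← hAB, Finset.mul_sum]
    apply Finset.sum_congr rfl
    intro k _
    rw [Finset.mul_sum, Finset.mul_sum, Finset.mul_sum, ← Finset.sum_add_distrib]
    apply Finset.sum_congr rfl
    intro j _
    have p1 : (j.factorial : ℝ) ≠ 0 := by positivity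
    have p2 : (k.factorial : ℝ) ≠ 0 := by positivity
    have hk := key m k j
    rw [mul_left_comm p, mul_left_comm (1 - p), ← mul_add, hk]
    clear hAB hA hB key hk
    ring
  · linear_combination (ff ((m : ℝ) + (N + 1)) (N + 1) * FK d p (-(N : ℝ) - 2) m *
      FK d p (-(N : ℝ) - 2) m) * h3
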